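/- arXiv:1412.4338 — 14 statements merged into one kernel-verified Lean document; each statement's English description precedes it below -/
import Mathlib

section
/- For all real numbers a, b with a ≥ 0 and b ≥ 0, and every real α > 1/2, one has (a^α − b^α)² ≤ (α²/(2α−1)) · (a − b) · (a^(2α−1) − b^(2α−1)). -/
theorem rpow_chain_aux_mono (α t : ℝ) (hα : 1 / 2 < α) :
    MonotoneOn (fun x : ℝ => t ^ 2 * x - 2 * t / α * x ^ α + x ^ (2 * α - 1) / (2 * α - 1))
      (Set.Ici 0) := by
  have h1 : 0 < α := by linarith
  have h2 : 0 < 2 * α - 1 := by linarith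
  have hd : ∀ x : ℝ, 0 < x → HasDerivAt
      (fun x : ℝ => t ^ 2 * x - 2 * t / α * x ^ α + x ^ (2 * α - 1) / (2 * α - 1))
      ((t - x ^ (α - 1)) ^ 2) x := by
    intro x hx
    have e1 := (Real.hasDerivAt_rpow_const (p := α) (Or.inl hx.ne')).const_mul (2 * t / α)
    have e2 := (Real.hasDerivAt_rpow_const (p := 2 * α - 1) (Or.inl hx.ne')).div_const (2 * α - 1)
    have e0 := (hasDerivAt_id x).const_mul (t ^ 2)
    refine ((e0.sub e1).add e2).congr_deriv ?_
    have e3 : x ^ (2 * α - 1 - 1) = (x ^ (α - 1)) ^ 2 := by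
      rw [sq, ← Real.rpow_add hx]
      congr 1
      ring
    rw [e3]
    field_simp
    ring
  refine monotoneOn_of_deriv_nonneg (convex_Ici 0) ?_ ?_ ?_
  · have c1 : Continuous fun x : ℝ => x ^ α := Real.continuous_rpow_const h1.le
    have c2 : Continuous fun x : ℝ => x ^ (2 * α - 1) := Real.continuous_rpow_const h2.le
    exact (((continuous_const.mul continuous_id).sub (continuous_const.mul c1)).add
      (c2.div_const _)).continuousOn
  · intro x hx
    rw [interior_Ici] at hx
    exact (hd x hx).differentiableAt.differentiableWithinAt
  · intro x hx
    rw [interior_Ici] at hx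
    rw [(hd x hx).deriv]
    positivity

theorem rpow_chain_aux (a b α : ℝ) (hb : 0 ≤ b) (hab : b ≤ a) (hα : 1 / 2 < α) :
    (a ^ α - b ^ α) ^ 2 ≤
      α ^ 2 / (2 * α - 1) * (a - b) * (a ^ (2 * α - 1) - b ^ (2 * α - 1)) := by
  have h1 : 0 < α := by linarith
  have h2 : 0 < 2 * α - 1 := by linarith
  have h := discrim_le_zero (a := a - b) (b := -(2 / α * (a ^ α - b ^ α)))
    (c := (a ^ (2 * α - 1) - b ^ (2 * α - 1)) / (2 * α - 1)) (by
      intro t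
      have := rpow_chain_aux_mono α t hα (Set.mem_Ici.2 hb) (Set.mem_Ici.2 (hb.trans hab)) hab
      simp only at this
      have e : (a - b) * (t * t) + -(2 / α * (a ^ α - b ^ α)) * t
        + (a ^ (2 * α - 1) - b ^ (2 * α - 1)) / (2 * α - 1)
        = (t ^ 2 * a - 2 * t / α * a ^ α + a ^ (2 * α - 1) / (2 * α - 1))
        - (t ^ 2 * b - 2 * t / α * b ^ α + b ^ (2 * α - 1) / (2 * α - 1)) := by ring
      rw [e]
      linarith)
  have e : (a ^ α - b ^ α) ^ 2
      - α ^ 2 / (2 * α - 1) * (a - b) * (a ^ (2 * α - 1) - b ^ (2 * α - 1))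
      = α ^ 2 / 4 * discrim (a - b) (-(2 / α * (a ^ α - b ^ α)))
        ((a ^ (2 * α - 1) - b ^ (2 * α - 1)) / (2 * α - 1)) := by
    unfold discrim
    generalize a ^ (2 * α - 1) = A
    generalize b ^ (2 * α - 1) = B
    field_simp
    ring
  have := mul_nonpos_of_nonneg_of_nonpos (by positivity : 0 ≤ α ^ 2 / 4) h
  linarith

/-- Lemma B.1(i): chain-rule-type inequality for real powers. -/
theorem rpow_chain_rule_ineq (a b α : ℝ) (ha : 0 ≤ a) (hb : 0 ≤ b) (hα : 1 / 2 < α) :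
    (a ^ α - b ^ α) ^ 2 ≤
      α ^ 2 / (2 * α - 1) * (a - b) * (a ^ (2 * α - 1) - b ^ (2 * α - 1)) := by
  rcases le_total b a with h | h
  · exact rpow_chain_aux a b α hb h hα
  · have := rpow_chain_aux b a α ha h hα
    linarith
end

section
/- For all real numbers a, b with a ≥ 0 and b ≥ 0, and every real α ≥ 1, one has |a^(2α−1)·b − a·b^(2α−1)| ≤ (1 − 1/α) · |a^(2α) − b^(2α)|. -/
theorem sinh_convex_aux : ConvexOn ℝ (Set.Ici 0) Real.sinh := by
  apply convexOn_of_deriv2_nonneg (convex_Ici 0) Real.continuous_sinh.continuousOn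
    Real.differentiable_sinh.differentiableOn
  · rw [Real.deriv_sinh]; exact Real.differentiable_cosh.differentiableOn
  · intro x hx
    simp only [interior_Ici, Set.mem_Ioi] at hx
    simp only [Function.iterate_succ, Function.iterate_zero, Function.comp, id, Real.deriv_sinh,
      Real.deriv_cosh]
    exact Real.sinh_nonneg_iff.2 hx.le

theorem rpow_cross_aux (a b α : ℝ) (hb : 0 ≤ b) (hα : 1 ≤ α) (hab : b ≤ a) :
    |a ^ (2 * α - 1) * b - a * b ^ (2 * α - 1)| ≤
      (1 - 1 / α) * |a ^ (2 * α) - b ^ (2 * α)| := by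
  have hl0 : 0 ≤ 1 - 1 / α := by
    rw [sub_nonneg, div_le_one (by linarith)]; exact hα
  rcases hb.eq_or_lt with rfl | hb'
  · rw [Real.zero_rpow (by linarith : 2 * α - 1 ≠ 0)]
    simp only [mul_zero, sub_zero, abs_zero]
    positivity
  have ha' : 0 < a := hb'.trans_le hab
  obtain ⟨m, u, hu, rfl, rfl⟩ : ∃ m u : ℝ, 0 ≤ u ∧ a = Real.exp (m + u) ∧ b = Real.exp (m - u) := by
    refine ⟨(Real.log a + Real.log b) / 2, (Real.log a - Real.log b) / 2, ?_, ?_, ?_⟩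
    · have := Real.log_le_log hb' hab
      linarith
    · rw [show (Real.log a + Real.log b) / 2 + (Real.log a - Real.log b) / 2 = Real.log a by ring,
        Real.exp_log ha']
    · rw [show (Real.log a + Real.log b) / 2 - (Real.log a - Real.log b) / 2 = Real.log b by ring,
        Real.exp_log hb']
  have e1 : Real.exp (m + u) ^ (2 * α - 1) * Real.exp (m - u)
      - Real.exp (m + u) * Real.exp (m - u) ^ (2 * α - 1)
      = 2 * Real.exp (2 * α * m) * Real.sinh ((1 - 1 / α) * (2 * α * u)) := by
    rw [show (1 - 1 / α) * (2 * α * u) = (2 * α - 2) * u by field_simp, Real.sinh_eq,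
      ← Real.exp_mul, ← Real.exp_mul, ← Real.exp_add, ← Real.exp_add,
      show (m + u) * (2 * α - 1) + (m - u) = 2 * α * m + (2 * α - 2) * u by ring,
      show (m + u) + (m - u) * (2 * α - 1) = 2 * α * m + -((2 * α - 2) * u) by ring,
      Real.exp_add, Real.exp_add]
    ring
  have e2 : Real.exp (m + u) ^ (2 * α) - Real.exp (m - u) ^ (2 * α)
      = 2 * Real.exp (2 * α * m) * Real.sinh (2 * α * u) := by
    rw [Real.sinh_eq, ← Real.exp_mul, ← Real.exp_mul,
      show (m + u) * (2 * α) = 2 * α * m + 2 * α * u by ring,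
      show (m - u) * (2 * α) = 2 * α * m + -(2 * α * u) by ring,
      Real.exp_add, Real.exp_add]
    ring
  have hx : 0 ≤ 2 * α * u := by positivity
  have key := sinh_convex_aux.2 (Set.mem_Ici.2 hx) (Set.mem_Ici.2 le_rfl) hl0
    (by positivity : 0 ≤ 1 / α) (by ring)
  simp only [smul_eq_mul, mul_zero, add_zero, Real.sinh_zero] at key
  have h1 : 0 ≤ Real.sinh ((1 - 1 / α) * (2 * α * u)) :=
    Real.sinh_nonneg_iff.2 (mul_nonneg hl0 hx)
  have h2 : 0 ≤ Real.sinh (2 * α * u) := Real.sinh_nonneg_iff.2 hx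
  rw [e1, e2, abs_of_nonneg (by positivity), abs_of_nonneg (by positivity)]
  calc _ ≤ 2 * Real.exp (2 * α * m) * ((1 - 1 / α) * Real.sinh (2 * α * u)) := by gcongr
    _ = _ := by ring

/-- Lemma B.1(ii). -/
theorem rpow_cross_term_ineq (a b α : ℝ) (ha : 0 ≤ a) (hb : 0 ≤ b) (hα : 1 ≤ α) :
    |a ^ (2 * α - 1) * b - a * b ^ (2 * α - 1)| ≤
      (1 - 1 / α) * |a ^ (2 * α) - b ^ (2 * α)| := by
  rcases le_total b a with h | h
  · exact rpow_cross_aux a b α hb hα h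
  · have := rpow_cross_aux b a α ha hα h
    rw [abs_sub_comm, abs_sub_comm (a ^ (2 * α)), mul_comm a, mul_comm _ b]
    rwa [mul_comm _ a] at this ⊢
end

section
/- For all real numbers a, b with a ≥ 0 and b ≥ 0, and every real α ≥ 1/2, one has (a^(2α−1) + b^(2α−1)) · |a − b| ≤ 4 · |a^α − b^α| · (a^α + b^α). -/
theorem rpow_sum_diff_aux (a b α : ℝ) (hb : 0 ≤ b) (hab : b ≤ a) (hα : 1 / 2 ≤ α) :
    (a ^ (2 * α - 1) + b ^ (2 * α - 1)) * |a - b| ≤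
      4 * |a ^ α - b ^ α| * (a ^ α + b ^ α) := by
  have ha : 0 ≤ a := hb.trans hab
  have key : ∀ x : ℝ, 0 ≤ x → x ^ (2 * α - 1) * x = x ^ α * x ^ α := by
    intro x hx
    rcases hx.eq_or_lt with h | h
    · rw [← h, Real.zero_rpow (by linarith : α ≠ 0)]; simp
    · rw [← Real.rpow_add h, ← Real.rpow_add_one h.ne']
      congr 1; ring
  have h1 : b ^ (2 * α - 1) ≤ a ^ (2 * α - 1) := Real.rpow_le_rpow hb hab (by linarith)
  have h2 : b ^ α ≤ a ^ α := Real.rpow_le_rpow hb hab (by linarith)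
  have h0 : 0 ≤ b ^ α := Real.rpow_nonneg hb _
  rw [abs_of_nonneg (sub_nonneg.2 hab), abs_of_nonneg (sub_nonneg.2 h2)]
  have ka := key a ha
  have kb := key b hb
  have m1 := mul_le_mul_of_nonneg_right h1 (sub_nonneg.2 hab)
  have m2 := mul_le_mul_of_nonneg_right h1 hb
  have m3 := mul_self_le_mul_self h0 h2
  linarith

/-- Lemma B.1(iii). -/
theorem rpow_sum_diff_ineq (a b α : ℝ) (ha : 0 ≤ a) (hb : 0 ≤ b) (hα : 1 / 2 ≤ α) :
    (a ^ (2 * α - 1) + b ^ (2 * α - 1)) * |a - b| ≤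
      4 * |a ^ α - b ^ α| * (a ^ α + b ^ α) := by
  rcases le_total b a with h | h
  · exact rpow_sum_diff_aux a b α hb h hα
  · have := rpow_sum_diff_aux b a α ha h hα
    rwa [abs_sub_comm b a, abs_sub_comm (b ^ α), add_comm (b ^ α), add_comm (b ^ (2 * α - 1))]
      at this
end

section
/- For every real α ≥ 1 and every real z with 0 ≤ z < 1, one has z − z^(2α−1) ≤ (1 − 1/α) · (1 − z^(2α)). -/
lemma sinh_mul_le_aux (c y : ℝ) (hc0 : 0 ≤ c) (hc1 : c ≤ 1) (hy : 0 ≤ y) :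
    Real.sinh (c * y) ≤ c * Real.sinh y := by
  have hmono : MonotoneOn (fun y => c * Real.sinh y - Real.sinh (c * y)) (Set.Ici 0) := by
    have hd : ∀ x : ℝ, HasDerivAt (fun y => c * Real.sinh y - Real.sinh (c * y))
        (c * Real.cosh x - Real.cosh (c * x) * (c * 1)) x := fun x =>
      ((Real.hasDerivAt_sinh x).const_mul c).sub (((hasDerivAt_id x).const_mul c).sinh)
    refine monotoneOn_of_deriv_nonneg (convex_Ici 0)
      (fun x _ => (hd x).continuousAt.continuousWithinAt)
      (fun x _ => (hd x).differentiableAt.differentiableWithinAt) ?_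
    intro x hx
    rw [interior_Ici] at hx
    have hx0 : (0 : ℝ) < x := hx
    rw [(hd x).deriv]
    have h : Real.cosh (c * x) ≤ Real.cosh x := by
      rw [Real.cosh_le_cosh, abs_of_nonneg (by positivity), abs_of_pos hx0]
      nlinarith
    nlinarith [mul_le_mul_of_nonneg_left h hc0]
  have := hmono (Set.mem_Ici.2 le_rfl) (Set.mem_Ici.2 hy) hy
  simp at this
  linarith

/-- Key inequality in the proof of Lemma B.1(ii). -/
theorem rpow_unit_interval_ineq (α z : ℝ) (hα : 1 ≤ α) (hz0 : 0 ≤ z) (hz1 : z < 1) :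
    z - z ^ (2 * α - 1) ≤ (1 - 1 / α) * (1 - z ^ (2 * α)) := by
  have hα0 : 0 < α := by linarith
  have hc0 : 0 ≤ 1 - 1 / α := by
    rw [sub_nonneg, div_le_one hα0]; exact hα
  have hc1 : 1 - 1 / α ≤ 1 := by
    have : 0 < 1 / α := by positivity
    linarith
  rcases hz0.eq_or_lt with h | h
  · subst h
    rw [Real.zero_rpow (by linarith), Real.zero_rpow (by linarith)]
    linarith
  · have ht : Real.log z < 0 := Real.log_neg h hz1
    have key := sinh_mul_le_aux (1 - 1 / α) (α * -Real.log z) hc0 hc1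
      (mul_nonneg hα0.le (by linarith))
    have e : (1 - 1 / α) * (α * -Real.log z) = -((α - 1) * Real.log z) := by
      field_simp
    rw [e, Real.sinh_eq, Real.sinh_eq] at key
    have key2 := mul_le_mul_of_nonneg_left key (Real.exp_pos (α * Real.log z)).le
    have a1 : Real.exp (α * Real.log z) * Real.exp (-((α - 1) * Real.log z)) = z := by
      rw [← Real.exp_add]
      ring_nf
      exact Real.exp_log h
    have a2 : Real.exp (α * Real.log z) * Real.exp (- -((α - 1) * Real.log z))
        = z ^ (2 * α - 1) := by
      rw [← Real.exp_add, Real.rpow_def_of_pos h]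
      ring_nf
    have a3 : Real.exp (α * Real.log z) * Real.exp (α * -Real.log z) = 1 := by
      rw [← Real.exp_add]
      ring_nf
      exact Real.exp_zero
    have a4 : Real.exp (α * Real.log z) * Real.exp (-(α * -Real.log z)) = z ^ (2 * α) := by
      rw [← Real.exp_add, Real.rpow_def_of_pos h]
      ring_nf
    generalize 1 - 1 / α = c at key2 ⊢
    have r : Real.exp (α * Real.log z) * (c * ((Real.exp (α * -Real.log z)
        - Real.exp (-(α * -Real.log z))) / 2)) = c * (1 - z ^ (2 * α)) / 2 := by
      rw [← a3, ← a4]; ring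
    rw [r] at key2
    linarith
end

section
/- For all real numbers u, w ≥ 0, all real numbers p, q > 0, and every real α ≥ 1, one has (p·u^(2α−1) − q·w^(2α−1)) · (u/p − w/q) ≥ ((2α−1)/α²) · (u^α − w^α)² + ((u^(2α) + w^(2α))/2) · (p − q) · (1/p − 1/q) − (2(α−1)/α) · ((u^α + w^α)/2) · ((p+q)/2) · |u^α − w^α| · |1/p − 1/q|. -/
lemma aux_sinh (l y : ℝ) (h0 : 0 ≤ l) (h1 : l ≤ 1) (hy : 0 ≤ y) :
    Real.sinh (l * y) ≤ l * Real.sinh y := by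
  have hd : ∀ x : ℝ, HasDerivAt (fun y => l * Real.sinh y - Real.sinh (l * y))
      (l * Real.cosh x - Real.cosh (l * x) * (l * 1)) x := by
    intro x
    exact ((Real.hasDerivAt_sinh x).const_mul l).sub
      (((hasDerivAt_id x).const_mul l).sinh)
  have hm : MonotoneOn (fun y => l * Real.sinh y - Real.sinh (l * y)) (Set.Ici 0) := by
    apply monotoneOn_of_deriv_nonneg (convex_Ici 0)
    · exact fun x _ => (hd x).continuousAt.continuousWithinAt
    · exact fun x _ => (hd x).differentiableAt.differentiableWithinAt
    · intro x hx
      rw [interior_Ici, Set.mem_Ioi] at hx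
      rw [(hd x).deriv]
      have : Real.cosh (l * x) ≤ Real.cosh x := by
        rw [Real.cosh_le_cosh, abs_of_nonneg (by positivity), abs_of_pos hx]
        nlinarith
      nlinarith
  have := hm (Set.mem_Ici.2 le_rfl) (Set.mem_Ici.2 hy) hy
  simp at this
  linarith

lemma aux_facts (u w α : ℝ) (hw : 0 ≤ w) (huw : w ≤ u) (hα : 1 ≤ α) :
    ((2 * α - 1) / α ^ 2) * (u ^ α - w ^ α) ^ 2 ≤
      (u ^ α) ^ 2 + (w ^ α) ^ 2 - u ^ (2 * α - 1) * w - w ^ (2 * α - 1) * u ∧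
    |u ^ (2 * α - 1) * w - w ^ (2 * α - 1) * u| ≤
      (α - 1) / α * |(u ^ α) ^ 2 - (w ^ α) ^ 2| := by
  have ha : 0 < α := by linarith
  have hl0 : 0 ≤ (α - 1) / α := div_nonneg (by linarith) ha.le
  have hl1 : (α - 1) / α ≤ 1 := by rw [div_le_one ha]; linarith
  have hc : (2 * α - 1) / α ^ 2 = 1 - ((α - 1) / α) ^ 2 := by field_simp; ring
  rcases hw.eq_or_lt with rfl | hw
  · rw [Real.zero_rpow ha.ne', Real.zero_rpow (by linarith : 2 * α - 1 ≠ 0), hc]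
    constructor
    · nlinarith [mul_nonneg (sq_nonneg ((α - 1) / α)) (sq_nonneg (u ^ α))]
    · simp; positivity
  have hu : 0 < u := by linarith
  obtain ⟨m, s, hs, rfl, rfl⟩ : ∃ m s : ℝ, 0 ≤ s ∧ u = Real.exp (m + s) ∧
      w = Real.exp (m - s) := by
    refine ⟨(Real.log u + Real.log w) / 2, (Real.log u - Real.log w) / 2, ?_, ?_, ?_⟩
    · linarith [Real.log_le_log hw huw]
    · rw [show (Real.log u + Real.log w) / 2 + (Real.log u - Real.log w) / 2 = Real.log u by ring,
        Real.exp_log hu]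
    · rw [show (Real.log u + Real.log w) / 2 - (Real.log u - Real.log w) / 2 = Real.log w by ring,
        Real.exp_log hw]
  have e1 : Real.exp (m + s) ^ α = Real.exp (m * α) * Real.exp (α * s) := by
    rw [← Real.exp_mul, ← Real.exp_add]; ring_nf
  have e2 : Real.exp (m - s) ^ α = Real.exp (m * α) * Real.exp (-(α * s)) := by
    rw [← Real.exp_mul, ← Real.exp_add]; ring_nf
  have e3 : Real.exp (m + s) ^ (2 * α - 1) * Real.exp (m - s) =
      Real.exp (m * α) ^ 2 * Real.exp ((α - 1) * s) ^ 2 := by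
    rw [← Real.exp_mul, ← Real.exp_add, ← Real.exp_nat_mul, ← Real.exp_nat_mul, ← Real.exp_add]
    push_cast; ring_nf
  have e4 : Real.exp (m - s) ^ (2 * α - 1) * Real.exp (m + s) =
      Real.exp (m * α) ^ 2 * Real.exp (-((α - 1) * s)) ^ 2 := by
    rw [← Real.exp_mul, ← Real.exp_add, ← Real.exp_nat_mul, ← Real.exp_nat_mul, ← Real.exp_add]
    push_cast; ring_nf
  have f1 := aux_sinh ((α - 1) / α) (α * s) hl0 hl1 (by positivity)
  have f2 := aux_sinh ((α - 1) / α) (2 * (α * s)) hl0 hl1 (by positivity)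
  have g1 : (α - 1) / α * (α * s) = (α - 1) * s := by field_simp
  have g2 : (α - 1) / α * (2 * (α * s)) = 2 * ((α - 1) * s) := by field_simp
  have hs1 : 0 ≤ (α - 1) * s := mul_nonneg (by linarith) hs
  rw [g1] at f1
  rw [g2] at f2
  have f0 : 0 ≤ Real.sinh ((α - 1) * s) := Real.sinh_nonneg_iff.2 hs1
  have f00 : 0 ≤ Real.sinh (2 * ((α - 1) * s)) := Real.sinh_nonneg_iff.2 (by positivity)
  have f01 : 0 ≤ Real.sinh (2 * (α * s)) := Real.sinh_nonneg_iff.2 (by positivity)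
  have d : ∀ x : ℝ, Real.exp x ^ 2 - Real.exp (-x) ^ 2 = 2 * Real.sinh (2 * x) := by
    intro x
    rw [Real.sinh_eq, ← Real.exp_nat_mul, ← Real.exp_nat_mul]
    push_cast; ring_nf
  have d1 : ∀ x : ℝ, Real.exp x - Real.exp (-x) = 2 * Real.sinh x := by
    intro x
    rw [Real.sinh_eq]; ring
  have d2 : ∀ x : ℝ, Real.exp x ^ 2 + Real.exp (-x) ^ 2 = 4 * Real.sinh x ^ 2 + 2 := by
    intro x
    have : Real.exp x * Real.exp (-x) = 1 := by rw [← Real.exp_add]; simp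
    rw [Real.sinh_eq]; linarith
  rw [e3, e4, e1, e2, hc]
  set E := Real.exp (m * α)
  set l := (α - 1) / α
  constructor
  · have k : Real.sinh ((α - 1) * s) ^ 2 ≤ (l * Real.sinh (α * s)) ^ 2 :=
      pow_le_pow_left₀ f0 f1 2
    have k2 := mul_le_mul_of_nonneg_left k (sq_nonneg E)
    rw [← mul_sub, d1]
    have := d2 (α * s)
    have := d2 ((α - 1) * s)
    calc _ = 4 * (E ^ 2 * Real.sinh (α * s) ^ 2) - 4 * (E ^ 2 * (l * Real.sinh (α * s)) ^ 2) := by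
          ring
      _ ≤ 4 * (E ^ 2 * Real.sinh (α * s) ^ 2) - 4 * (E ^ 2 * Real.sinh ((α - 1) * s) ^ 2) := by
          linarith
      _ = E ^ 2 * (4 * Real.sinh (α * s) ^ 2 + 2) - E ^ 2 * (4 * Real.sinh ((α - 1) * s) ^ 2 + 2) := by
          ring
      _ = _ := by rw [← d2, ← d2]; ring
  · rw [← mul_sub, d, mul_pow, mul_pow, ← mul_sub, d, abs_of_nonneg (by positivity),
      abs_of_nonneg (by positivity)]
    have := mul_le_mul_of_nonneg_left f2 (sq_nonneg E)
    linarith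

/-- The per-edge inequality (2.11) in the proof of Lemma 2.2 of the paper. -/
theorem per_edge_lower_bound (u w p q α : ℝ) (hu : 0 ≤ u) (hw : 0 ≤ w)
    (hp : 0 < p) (hq : 0 < q) (hα : 1 ≤ α) :
    ((2 * α - 1) / α ^ 2) * (u ^ α - w ^ α) ^ 2 +
        ((u ^ (2 * α) + w ^ (2 * α)) / 2) * (p - q) * (1 / p - 1 / q) -
        (2 * (α - 1) / α) * ((u ^ α + w ^ α) / 2) * ((p + q) / 2) *
          |u ^ α - w ^ α| * |1 / p - 1 / q|
      ≤ (p * u ^ (2 * α - 1) - q * w ^ (2 * α - 1)) * (u / p - w / q) := by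
  have ha : 0 < α := by linarith
  obtain ⟨F1, F2⟩ : ((2 * α - 1) / α ^ 2) * (u ^ α - w ^ α) ^ 2 ≤
      (u ^ α) ^ 2 + (w ^ α) ^ 2 - u ^ (2 * α - 1) * w - w ^ (2 * α - 1) * u ∧
    |u ^ (2 * α - 1) * w - w ^ (2 * α - 1) * u| ≤
      (α - 1) / α * |(u ^ α) ^ 2 - (w ^ α) ^ 2| := by
    rcases le_total w u with h | h
    · exact aux_facts u w α hw h hα
    · obtain ⟨h1, h2⟩ := aux_facts w u α hu h hα
      constructor
      · linarith [h1]
      · rw [abs_sub_comm, abs_sub_comm ((u ^ α) ^ 2)]; exact h2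
  have pw : ∀ x : ℝ, 0 ≤ x → x ^ (2 * α) = (x ^ α) ^ 2 := by
    intro x hx
    rw [mul_comm, Real.rpow_mul hx]; norm_cast
  have pw1 : ∀ x : ℝ, 0 ≤ x → x ^ (2 * α - 1) * x = (x ^ α) ^ 2 := by
    intro x hx
    rw [← pw x hx]
    nth_rewrite 2 [← Real.rpow_one x]
    rw [← Real.rpow_add' hx (by linarith)]; ring_nf
  have U := pw1 u hu
  have W := pw1 w hw
  rw [pw u hu, pw w hw]
  have hA : 0 ≤ u ^ α := Real.rpow_nonneg hu α
  have hB : 0 ≤ w ^ α := Real.rpow_nonneg hw α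
  have hC : 0 ≤ (2 * α - 1) / α ^ 2 * (u ^ α - w ^ α) ^ 2 :=
    mul_nonneg (div_nonneg (by linarith) (by positivity)) (sq_nonneg _)
  generalize u ^ α = a at *
  generalize w ^ α = b at *
  generalize u ^ (2 * α - 1) = x at *
  generalize w ^ (2 * α - 1) = y at *
  generalize (2 * α - 1) / α ^ 2 * (a - b) ^ 2 = C at *
  have hcross : (2 * (α - 1) / α) * ((a + b) / 2) * ((p + q) / 2) * |a - b| * |1 / p - 1 / q|
      = (α - 1) / α * |a ^ 2 - b ^ 2| * (|p / q - q / p| / 2) := by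
    have h1 : |a ^ 2 - b ^ 2| = (a + b) * |a - b| := by
      rw [sq_sub_sq, abs_mul, abs_of_nonneg (by positivity : 0 ≤ a + b)]
    have h2 : |p / q - q / p| = (p + q) * |1 / p - 1 / q| := by
      rw [abs_sub_comm (1 / p), ← abs_of_pos (by positivity : 0 < p + q), ← abs_mul]
      congr 1; field_simp; ring
    rw [h1, h2]; ring
  rw [hcross]
  have ht : 2 ≤ p / q + q / p := by
    rw [div_add_div _ _ hq.ne' hp.ne', le_div_iff₀ (by positivity)]
    nlinarith [sq_nonneg (p - q)]
  have e1 : (p - q) * (1 / p - 1 / q) = 2 - (p / q + q / p) := by field_simp; ring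
  have e2 : (p * x - q * y) * (u / p - w / q) =
      x * u + y * w - (p / q) * (x * w) - (q / p) * (y * u) := by field_simp; ring
  rw [mul_assoc ((a ^ 2 + b ^ 2) / 2), e1, e2, U, W]
  have m1 := mul_le_mul_of_nonneg_right F2 (by positivity : 0 ≤ |p / q - q / p| / 2)
  have m2 : (x * w - y * u) * (p / q - q / p) ≤ |x * w - y * u| * |p / q - q / p| := by
    rw [← abs_mul]; exact le_abs_self _
  nlinarith [mul_nonneg (sub_nonneg.2 (hC.trans F1)) (sub_nonneg.2 ht)]
end

section
/- For every real s > 0, one has (√(1 + s²) − 1)/s − log(s + √(1 + s²)) ≤ −(s/2) · (1 − s²/10). -/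
/-- Upper bound for `F(s)` in the proof of Theorem 1.6. -/
theorem F_upper_bound (s : ℝ) (hs : 0 < s) :
    (Real.sqrt (1 + s ^ 2) - 1) / s - Real.log (s + Real.sqrt (1 + s ^ 2)) ≤
      -(s / 2) * (1 - s ^ 2 / 10) := by
  have hr1 : ∀ x : ℝ, 1 ≤ Real.sqrt (1 + x ^ 2) := fun x => by
    rw [Real.one_le_sqrt]; nlinarith [sq_nonneg x]
  have hr2 : ∀ x : ℝ, Real.sqrt (1 + x ^ 2) ^ 2 = 1 + x ^ 2 := fun x =>
    Real.sq_sqrt (by positivity)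
  let h : ℝ → ℝ := fun x =>
    Real.arsinh x - x / (1 + Real.sqrt (1 + x ^ 2)) - (x / 2 - x ^ 3 / 20)
  have hd : ∀ x : ℝ, HasDerivAt h (1 / (1 + Real.sqrt (1 + x ^ 2)) - 1 / 2 + 3 * x ^ 2 / 20) x := by
    intro x
    have h1 := hr1 x
    have h2 := hr2 x
    have e1 : HasDerivAt (fun y : ℝ => 1 + y ^ 2) (2 * x) x := by
      simpa using (hasDerivAt_pow 2 x).const_add 1
    have e2 := (e1.sqrt (by positivity)).const_add 1
    have e3 := (hasDerivAt_id' x).div e2 (by positivity)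
    have e4 := ((hasDerivAt_id' x).div_const 2).sub ((hasDerivAt_pow 3 x).div_const 20)
    refine (((Real.hasDerivAt_arsinh x).sub e3).sub e4).congr_deriv ?_
    generalize Real.sqrt (1 + x ^ 2) = r at *
    have hx : x ^ 2 = r ^ 2 - 1 := by linarith
    have hrp : r ≠ 0 := by positivity
    have hrq : 1 + r ≠ 0 := by positivity
    have : x * (2 * x / (2 * r)) = (r ^ 2 - 1) / r := by
      rw [← hx]; field_simp
    rw [this]
    norm_num
    rw [hx]
    field_simp
    ring
  have hm : Monotone h := by
    apply monotone_of_deriv_nonneg (fun x => (hd x).differentiableAt)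
    intro x
    rw [(hd x).deriv]
    have h1 := hr1 x
    have h2 := hr2 x
    generalize Real.sqrt (1 + x ^ 2) = r at *
    have hx : x ^ 2 = r ^ 2 - 1 := by linarith
    have : 1 / (1 + r) - 1 / 2 + 3 * x ^ 2 / 20
        = (r - 1) * (3 * (r + 1) ^ 2 - 10) / (20 * (1 + r)) := by
      have hrq : 1 + r ≠ 0 := by positivity
      rw [hx]; field_simp; ring
    rw [this]
    apply div_nonneg (mul_nonneg (by linarith) (by nlinarith)) (by linarith)
  have h0 := hm hs.le
  have e : (Real.sqrt (1 + s ^ 2) - 1) / s = s / (1 + Real.sqrt (1 + s ^ 2)) := by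
    have := hr1 s
    rw [div_eq_div_iff hs.ne' (by positivity)]
    linarith [hr2 s]
  rw [e]
  simp only [h, Real.arsinh_zero] at h0
  norm_num [Real.arsinh] at h0
  linarith
end

section
/- For every real s with 0 < s ≤ 3, one has (√(1 + s²) − 1)/s − log(s + √(1 + s²)) ≤ −s/20. -/
/-- Gaussian-regime upper bound for `F(s)`. -/
theorem F_gaussian_regime (s : ℝ) (hs : 0 < s) (hs3 : s ≤ 3) :
    (Real.sqrt (1 + s ^ 2) - 1) / s - Real.log (s + Real.sqrt (1 + s ^ 2)) ≤ -s / 20 := by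
  have hr2 : Real.sqrt (1 + s ^ 2) ^ 2 = 1 + s ^ 2 := Real.sq_sqrt (by positivity)
  have hr0 : 0 ≤ Real.sqrt (1 + s ^ 2) := Real.sqrt_nonneg _
  generalize Real.sqrt (1 + s ^ 2) = r at *
  have h1 : 1 ≤ r := by nlinarith
  have h4 : r ≤ 4 := by nlinarith
  have hlog := Real.le_log_one_add_of_nonneg (x := s + r - 1) (by linarith)
  rw [show 1 + (s + r - 1) = s + r by ring] at hlog
  have e : 2 * (s + r - 1) / (s + r - 1 + 2) = 2 * ((r - 1) / s) := by
    have : s + r - 1 + 2 ≠ 0 := by linarith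
    field_simp
    linear_combination -hr2
  have h : s / 20 ≤ (r - 1) / s := by
    rw [div_le_div_iff₀ (by norm_num) hs]
    nlinarith
  rw [e] at hlog
  linarith [neg_div 20 s]
end

section
/- For every real s with s ≥ e (Euler's number), one has (√(1 + s²) − 1)/s − log(s + √(1 + s²)) ≤ 1 − log(2s). -/
/-- Poisson-regime upper bound for `F(s)`. -/
theorem F_poisson_regime (s : ℝ) (hs : Real.exp 1 ≤ s) :
    (Real.sqrt (1 + s ^ 2) - 1) / s - Real.log (s + Real.sqrt (1 + s ^ 2)) ≤
      1 - Real.log (2 * s) := by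
  have h0 : 0 < s := lt_of_lt_of_le (Real.exp_pos 1) hs
  have h1 : Real.sqrt (1 + s ^ 2) ≤ 1 + s := by
    apply Real.sqrt_le_iff.mpr
    constructor
    · positivity
    · nlinarith
  have h2 : s ≤ Real.sqrt (1 + s ^ 2) := by
    apply Real.le_sqrt_of_sq_le
    linarith
  have h3 : (Real.sqrt (1 + s ^ 2) - 1) / s ≤ 1 := by
    rw [div_le_one h0]
    linarith
  have h4 : Real.log (2 * s) ≤ Real.log (s + Real.sqrt (1 + s ^ 2)) :=
    Real.log_le_log (by positivity) (by linarith)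
  linarith
end

section
/- For every real a ≥ 1 and every real x, one has a · (cosh(x) − 1) ≤ cosh(√a · x). -/
/-- `a (cosh x - 1) ≤ cosh (√a · x)` for `a ≥ 1`. -/
theorem cosh_scaling_ineq (a x : ℝ) (ha : 1 ≤ a) :
    a * (Real.cosh x - 1) ≤ Real.cosh (Real.sqrt a * x) := by
  have h1 := (Real.hasSum_cosh x).mul_left a
  have h2 := (Real.hasSum_cosh (Real.sqrt a * x)).add (hasSum_ite_eq (0 : ℕ) (a - 1))
  have h := hasSum_le (fun n => ?_) h1 h2
  · linarith
  · have h0 : (0 : ℝ) ≤ a := by linarith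
    rcases Nat.eq_zero_or_pos n with rfl | hn
    · simp
    · rw [if_neg hn.ne', add_zero, mul_pow, pow_mul (Real.sqrt a), Real.sq_sqrt h0, mul_div_assoc]
      have hx : 0 ≤ x ^ (2 * n) := by rw [pow_mul]; positivity
      exact mul_le_mul_of_nonneg_right (le_self_pow₀ ha hn.ne') (by positivity)
end

section
/- Let V be a nonempty finite type, ω : V → V → ℝ symmetric with ω x y ≥ 0 and ω x x = 0 for all x, y, and set μ(x) = ∑_y ω x y; assume μ(x) > 0 for all x. Let φ : V → ℝ be strictly positive and let h ∈ ℝ satisfy φ(x)/φ(y) + φ(y)/φ(x) − 2 ≤ h whenever ω x y > 0. Then for every g : V → ℝ, ∑_x μ(x) · g(x) · (𝓛_φ g)(x) ≤ h · ∑_x μ(x) · g(x)², where (𝓛_φ g)(x) = φ(x) · μ(x)⁻¹ · ∑_y ω x y · (g(y)/φ(y) − g(x)/φ(x)). -/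
open Finset in
/-- Quadratic form bound (2.4): `⟨g, 𝓛_φ g⟩_{ℓ²(V,μ)} ≤ h ‖g‖²_{ℓ²(V,μ)}`
for the Davies-tilted CSRW generator on a finite weighted graph. -/
theorem tilted_csrw_form_bound {V : Type*} [Fintype V] [Nonempty V]
    (ω : V → V → ℝ) (hsym : ∀ x y, ω x y = ω y x) (hnn : ∀ x y, 0 ≤ ω x y)
    (hdiag : ∀ x, ω x x = 0)
    (μ : V → ℝ) (hμ : ∀ x, μ x = ∑ y, ω x y) (hμpos : ∀ x, 0 < μ x)
    (φ : V → ℝ) (hφ : ∀ x, 0 < φ x)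
    (h : ℝ) (hh : ∀ x y, 0 < ω x y → φ x / φ y + φ y / φ x - 2 ≤ h)
    (g : V → ℝ) :
    ∑ x, μ x * g x * (φ x * (μ x)⁻¹ * ∑ y, ω x y * (g y / φ y - g x / φ x))
      ≤ h * ∑ x, μ x * g x ^ 2 := by
  have hL : ∑ x, μ x * g x * (φ x * (μ x)⁻¹ * ∑ y, ω x y * (g y / φ y - g x / φ x))
      = ∑ x, ∑ y, ω x y * (g x * φ x * (g y / φ y - g x / φ x)) := by
    refine Finset.sum_congr rfl fun x _ => ?_
    have h1 : μ x * g x * (φ x * (μ x)⁻¹ * ∑ y, ω x y * (g y / φ y - g x / φ x))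
        = (g x * φ x) * ∑ y, ω x y * (g y / φ y - g x / φ x) := by
      have := (hμpos x).ne'
      field_simp
    rw [h1, Finset.mul_sum]
    exact Finset.sum_congr rfl fun y _ => by ring
  have hR : h * ∑ x, μ x * g x ^ 2 = ∑ x, ∑ y, ω x y * (h * g x ^ 2) := by
    rw [Finset.mul_sum]
    refine Finset.sum_congr rfl fun x _ => ?_
    rw [← Finset.sum_mul, ← hμ x]
    ring
  have symm : ∀ a : V → V → ℝ, 2 * ∑ x, ∑ y, ω x y * a x y
      = ∑ x, ∑ y, ω x y * (a x y + a y x) := by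
    intro a
    have h2 : ∑ x, ∑ y, ω x y * a x y = ∑ x, ∑ y, ω x y * a y x := by
      rw [Finset.sum_comm]
      exact Finset.sum_congr rfl fun x _ => Finset.sum_congr rfl fun y _ => by rw [hsym]
    simp only [mul_add, Finset.sum_add_distrib]
    rw [← h2]
    ring
  rw [hL, hR]
  have key : 2 * ∑ x, ∑ y, ω x y * (g x * φ x * (g y / φ y - g x / φ x))
      ≤ 2 * ∑ x, ∑ y, ω x y * (h * g x ^ 2) := by
    rw [symm (fun x y => g x * φ x * (g y / φ y - g x / φ x)), symm (fun x _ => h * g x ^ 2)]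
    refine Finset.sum_le_sum fun x _ => Finset.sum_le_sum fun y _ => ?_
    rcases (hnn x y).eq_or_lt with h0 | h0
    · simp [← h0]
    refine mul_le_mul_of_nonneg_left ?_ h0.le
    have hx := hφ x
    have hy := hφ y
    have hc := hh x y h0
    have hc0 : 0 ≤ φ x / φ y + φ y / φ x - 2 := by
      have : φ x / φ y + φ y / φ x - 2 = (φ x - φ y) ^ 2 / (φ x * φ y) := by
        field_simp
        ring
      rw [this]
      positivity
    have e : g x * φ x * (g y / φ y - g x / φ x) + g y * φ y * (g x / φ x - g y / φ y)
        = g x * g y * (φ x / φ y + φ y / φ x - 2) - (g x - g y) ^ 2 := by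
      field_simp
      ring
    simp only [e]
    generalize φ x / φ y + φ y / φ x - 2 = c at hc hc0
    nlinarith [mul_nonneg hc0 (sq_nonneg (g x - g y)), sq_nonneg (g x - g y),
      mul_nonneg hc0 (add_nonneg (sq_nonneg (g x)) (sq_nonneg (g y))),
      mul_nonneg (sub_nonneg.2 hc) (add_nonneg (sq_nonneg (g x)) (sq_nonneg (g y)))]
  linarith
end

section
/- Let V be a nonempty finite type, ω : V → V → ℝ symmetric with ω x y ≥ 0 and ω x x = 0, and μ(x) = ∑_y ω x y with μ(x) > 0 for all x. Let φ : V → ℝ be strictly positive and let h ∈ ℝ satisfy φ(x)/φ(y) + φ(y)/φ(x) − 2 ≤ h whenever ω x y > 0. Suppose v : ℝ → V → ℝ is such that for every x and every t ≥ 0, the map t ↦ v t x has derivative (𝓛_φ (v t))(x) at t, where (𝓛_φ g)(x) = φ(x) · μ(x)⁻¹ · ∑_y ω x y · (g(y)/φ(y) − g(x)/φ(x)). Then for every t ≥ 0, ∑_x μ(x) · (v t x)² ≤ exp(2·h·t) · ∑_x μ(x) · (v 0 x)². -/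
open Finset in
/-- A-priori estimate (Lemma 2.1): `‖v_t‖²_{ℓ²(V,μ)} ≤ e^{2ht} ‖v_0‖²_{ℓ²(V,μ)}`
for solutions of the tilted CSRW heat equation on a finite weighted graph. -/
theorem tilted_csrw_apriori {V : Type*} [Fintype V] [Nonempty V]
    (ω : V → V → ℝ) (hsym : ∀ x y, ω x y = ω y x) (hnn : ∀ x y, 0 ≤ ω x y)
    (hdiag : ∀ x, ω x x = 0)
    (μ : V → ℝ) (hμ : ∀ x, μ x = ∑ y, ω x y) (hμpos : ∀ x, 0 < μ x)
    (φ : V → ℝ) (hφ : ∀ x, 0 < φ x)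
    (h : ℝ) (hh : ∀ x y, 0 < ω x y → φ x / φ y + φ y / φ x - 2 ≤ h)
    (v : ℝ → V → ℝ)
    (hv : ∀ x, ∀ t : ℝ, 0 ≤ t →
      HasDerivAt (fun s => v s x)
        (φ x * (μ x)⁻¹ * ∑ y, ω x y * (v t y / φ y - v t x / φ x)) t)
    (t : ℝ) (ht : 0 ≤ t) :
    ∑ x, μ x * v t x ^ 2 ≤ Real.exp (2 * h * t) * ∑ x, μ x * v 0 x ^ 2 := by
  have key : ∀ g : V → ℝ,
      ∑ x, 2 * (g x * (φ x * ∑ y, ω x y * (g y / φ y - g x / φ x)))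
        ≤ 2 * h * ∑ x, μ x * g x ^ 2 := by
    intro g
    set F : V → V → ℝ := fun x y => g x * (φ x * (ω x y * (g y / φ y - g x / φ x))) with hF
    have e1 : ∑ x, 2 * (g x * (φ x * ∑ y, ω x y * (g y / φ y - g x / φ x)))
        = ∑ x, ∑ y, (F x y + F y x) := by
      have hc : ∑ x, ∑ y, F y x = ∑ x, ∑ y, F x y := Finset.sum_comm
      simp only [Finset.sum_add_distrib]
      rw [hc, ← two_mul, ← Finset.mul_sum]
      simp only [hF, Finset.mul_sum]
    have e2 : 2 * h * ∑ x, μ x * g x ^ 2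
        = ∑ x, ∑ y, (h * (ω x y * g x ^ 2) + h * (ω y x * g y ^ 2)) := by
      have hc : ∑ x, ∑ y, h * (ω y x * g y ^ 2) = ∑ x, ∑ y, h * (ω x y * g x ^ 2) :=
        Finset.sum_comm
      simp only [Finset.sum_add_distrib]
      rw [hc]
      simp only [← Finset.mul_sum, ← Finset.sum_mul, ← hμ]
      ring
    rw [e1, e2]
    refine Finset.sum_le_sum fun x _ => Finset.sum_le_sum fun y _ => ?_
    rcases (hnn x y).eq_or_lt with h0 | h0
    · have h1 := hsym x y
      simp [hF, ← h1, ← h0]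
    · have hc := hh x y h0
      have hx := hφ x
      have hy := hφ y
      set c := φ x / φ y + φ y / φ x - 2 with hcdef
      have hc0 : 0 ≤ c := by
        have : c = (φ x - φ y) ^ 2 / (φ x * φ y) := by
          rw [hcdef]; field_simp; ring
        rw [this]; positivity
      have e3 : F x y + F y x = ω x y * (g x * g y * (c + 2) - g x ^ 2 - g y ^ 2) := by
        simp only [hF, hcdef, ← hsym x y]
        field_simp
        ring
      have e4 : h * (ω x y * g x ^ 2) + h * (ω y x * g y ^ 2)
          = ω x y * (h * (g x ^ 2 + g y ^ 2)) := by
        rw [← hsym x y]; ring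
      rw [e3, e4]
      refine mul_le_mul_of_nonneg_left ?_ h0.le
      have a1 : c * (g x ^ 2 + g y ^ 2) ≤ h * (g x ^ 2 + g y ^ 2) :=
        mul_le_mul_of_nonneg_right hc (by positivity)
      nlinarith [sq_nonneg (g x - g y), mul_nonneg hc0 (sq_nonneg (g x - g y)),
        mul_nonneg hc0 (sq_nonneg (g x)), mul_nonneg hc0 (sq_nonneg (g y))]
  have hE : ∀ s : ℝ, 0 ≤ s → HasDerivAt (fun s => ∑ x, μ x * v s x ^ 2)
      (∑ x, 2 * (v s x * (φ x * ∑ y, ω x y * (v s y / φ y - v s x / φ x)))) s := by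
    intro s hs
    refine HasDerivAt.fun_sum fun x _ => ?_
    have := ((hv x s hs).fun_pow 2).const_mul (μ x)
    refine this.congr_deriv ?_
    have := (hμpos x).ne'
    push_cast
    field_simp
  have hG : ∀ s : ℝ, 0 ≤ s →
      HasDerivAt (fun s => Real.exp (-(2 * h * s)) * ∑ x, μ x * v s x ^ 2)
      (Real.exp (-(2 * h * s)) *
        ((∑ x, 2 * (v s x * (φ x * ∑ y, ω x y * (v s y / φ y - v s x / φ x))))
          - 2 * h * ∑ x, μ x * v s x ^ 2)) s := by
    intro s hs
    have h1 : HasDerivAt (fun s : ℝ => -(2 * h * s)) (-(2 * h * 1)) s :=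
      ((hasDerivAt_id' s).const_mul (2 * h)).fun_neg
    refine (h1.exp.fun_mul (hE s hs)).congr_deriv ?_
    ring
  have anti : AntitoneOn (fun s => Real.exp (-(2 * h * s)) * ∑ x, μ x * v s x ^ 2)
      (Set.Ici 0) := by
    refine antitoneOn_of_deriv_nonpos (convex_Ici 0)
      (fun s hs => (hG s hs).continuousAt.continuousWithinAt) ?_ ?_
    · intro s hs
      rw [interior_Ici] at hs
      exact (hG s (le_of_lt hs)).differentiableAt.differentiableWithinAt
    · intro s hs
      rw [interior_Ici] at hs
      rw [(hG s (le_of_lt hs)).deriv]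
      exact mul_nonpos_of_nonneg_of_nonpos (Real.exp_pos _).le (sub_nonpos.2 (key (v s)))
  have fin := anti (Set.mem_Ici.2 le_rfl) (Set.mem_Ici.2 ht) ht
  simp only [mul_zero, neg_zero, Real.exp_zero, one_mul] at fin
  have := mul_le_mul_of_nonneg_left fin (Real.exp_pos (2 * h * t)).le
  rwa [← mul_assoc, ← Real.exp_add, add_neg_cancel, Real.exp_zero, one_mul] at this
end

section
/- Let V be a nonempty finite type, ω : V → V → ℝ symmetric with ω x y ≥ 0 and ω x x = 0, and μ(x) = ∑_y ω x y with μ(x) > 0 for all x. Let φ : V → ℝ be strictly positive, and suppose v : ℝ → V → ℝ satisfies v t x ≥ 0 for all t ≥ 0 and x, and for every x and t ≥ 0 the map t ↦ v t x has derivative (𝓛_φ (v t))(x) at t, where (𝓛_φ g)(x) = φ(x) · μ(x)⁻¹ · ∑_y ω x y · (g(y)/φ(y) − g(x)/φ(x)). Then for all 0 ≤ s ≤ t and all x, v t x ≥ exp(−(t − s)) · v s x. -/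
open Finset in
/-- Exponential lower bound `v(t,x) ≥ e^{-(t-s)} v(s,x)` for nonnegative solutions
of the tilted CSRW heat equation on a finite weighted graph. -/
theorem tilted_csrw_exp_lower_bound {V : Type*} [Fintype V] [Nonempty V]
    (ω : V → V → ℝ) (hsym : ∀ x y, ω x y = ω y x) (hnn : ∀ x y, 0 ≤ ω x y)
    (hdiag : ∀ x, ω x x = 0)
    (μ : V → ℝ) (hμ : ∀ x, μ x = ∑ y, ω x y) (hμpos : ∀ x, 0 < μ x)
    (φ : V → ℝ) (hφ : ∀ x, 0 < φ x)
    (v : ℝ → V → ℝ)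
    (hvnn : ∀ t : ℝ, 0 ≤ t → ∀ x, 0 ≤ v t x)
    (hv : ∀ x, ∀ t : ℝ, 0 ≤ t →
      HasDerivAt (fun s => v s x)
        (φ x * (μ x)⁻¹ * ∑ y, ω x y * (v t y / φ y - v t x / φ x)) t)
    (s t : ℝ) (hs : 0 ≤ s) (hst : s ≤ t) (x : V) :
    Real.exp (-(t - s)) * v s x ≤ v t x := by
  have hgen : ∀ r : ℝ, 0 ≤ r →
      -(v r x) ≤ φ x * (μ x)⁻¹ * ∑ y, ω x y * (v r y / φ y - v r x / φ x) := by
    intro r hr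
    have h1 : -(μ x * (v r x / φ x)) ≤ ∑ y, ω x y * (v r y / φ y - v r x / φ x) := by
      rw [hμ x, Finset.sum_mul, ← Finset.sum_neg_distrib]
      refine Finset.sum_le_sum fun y _ => ?_
      have h2 : 0 ≤ ω x y * (v r y / φ y) :=
        mul_nonneg (hnn x y) (div_nonneg (hvnn r hr y) (hφ y).le)
      linarith [mul_sub (ω x y) (v r y / φ y) (v r x / φ x)]
    have hp := hφ x
    have hm := hμpos x
    have h3 : 0 ≤ φ x * (μ x)⁻¹ := by positivity
    have h4 := mul_le_mul_of_nonneg_left h1 h3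
    have h5 : φ x * (μ x)⁻¹ * -(μ x * (v r x / φ x)) = -(v r x) := by
      field_simp
    linarith
  have hd : ∀ r : ℝ, 0 ≤ r → HasDerivAt (fun r => Real.exp r * v r x)
      (Real.exp r * v r x +
        Real.exp r * (φ x * (μ x)⁻¹ * ∑ y, ω x y * (v r y / φ y - v r x / φ x))) r :=
    fun r hr => (Real.hasDerivAt_exp r).mul (hv x r hr)
  have hmono : MonotoneOn (fun r => Real.exp r * v r x) (Set.Ici 0) := by
    refine monotoneOn_of_deriv_nonneg (convex_Ici 0)
      (fun r hr => (hd r hr).continuousAt.continuousWithinAt)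
      (fun r hr => (hd r (interior_subset hr)).differentiableAt.differentiableWithinAt) ?_
    intro r hr
    have hr0 : 0 ≤ r := interior_subset hr
    rw [(hd r hr0).deriv, ← mul_add]
    exact mul_nonneg (Real.exp_pos r).le (by linarith [hgen r hr0])
  have h := hmono (Set.mem_Ici.2 hs) (Set.mem_Ici.2 (hs.trans hst)) hst
  have h' : Real.exp s * v s x ≤ Real.exp t * v t x := h
  have he : Real.exp s = Real.exp t * Real.exp (-(t - s)) := by
    rw [← Real.exp_add]; congr 1; ring
  rw [he, mul_assoc] at h'
  exact le_of_mul_le_mul_left h' (Real.exp_pos t)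
end

section
/- Let Z : ℤ → ℝ satisfy Z i ≥ 1 for all i. Equip ℤ² with nearest-neighbour edges and conductances ω given by: ω(x, x ± (0,1)) = 1 (vertical edges) and ω(x, x + (1,0)) = Z(x₂) (horizontal edges on the line with second coordinate x₂). Then for every L ≥ 1 and every nearest-neighbour path z₀ = (0,0), z₁, …, z_l = (L, 0) in ℤ², writing k for the maximum of |second coordinate of z_j| over 0 ≤ j ≤ l, one has ∑_{j=0}^{l−1} min(1, ω(z_j, z_{j+1})^{−1/2}) ≥ 2k + L · (max_{−k ≤ i ≤ k} Z i)^{−1/2}. -/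
theorem abs_sub_le_sum_Ico_aux (a : ℕ → ℤ) (m n : ℕ) (h : m ≤ n) :
    |a n - a m| ≤ ∑ j ∈ Finset.Ico m n, |a (j + 1) - a j| := by
  induction n, h using Nat.le_induction with
  | base => simp
  | succ n hmn ih =>
    rw [Finset.sum_Ico_succ_top hmn]
    have h := abs_add_le (a (n + 1) - a n) (a n - a m)
    rw [show a (n + 1) - a n + (a n - a m) = a (n + 1) - a m by ring] at h
    linarith

open Finset in
/-- Deterministic lower-bound core of Lemma 1.9: any nearest-neighbour path in `ℤ²`
from `(0,0)` to `(L,0)` reaching maximal height `k` has `ω`-length at least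
`2k + L · (max_{-k ≤ i ≤ k} Z i)^{-1/2}`. -/
theorem chemical_distance_lower_bound (Z : ℤ → ℝ) (hZ : ∀ i, 1 ≤ Z i)
    (ω : ℤ × ℤ → ℤ × ℤ → ℝ)
    (hvu : ∀ x : ℤ × ℤ, ω x (x.1, x.2 + 1) = 1)
    (hvd : ∀ x : ℤ × ℤ, ω x (x.1, x.2 - 1) = 1)
    (hhr : ∀ x : ℤ × ℤ, ω x (x.1 + 1, x.2) = Z x.2)
    (hhl : ∀ x : ℤ × ℤ, ω x (x.1 - 1, x.2) = Z x.2)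
    (L : ℤ) (hL : 1 ≤ L)
    (l : ℕ) (z : ℕ → ℤ × ℤ)
    (h0 : z 0 = (0, 0)) (hend : z l = (L, 0))
    (hpath : ∀ j < l, |(z (j + 1)).1 - (z j).1| + |(z (j + 1)).2 - (z j).2| = 1)
    (k : ℤ) (hknn : 0 ≤ k)
    (hk : k = (Finset.range (l + 1)).sup'
      (Finset.nonempty_range_iff.mpr (Nat.succ_ne_zero l)) fun j => |(z j).2|) :
    2 * (k : ℝ) +
        (L : ℝ) * ((Finset.Icc (-k) k).sup'
          (Finset.nonempty_Icc.mpr (by linarith)) Z) ^ (-(1 / 2) : ℝ)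
      ≤ ∑ j ∈ Finset.range l, min 1 ((ω (z j) (z (j + 1))) ^ (-(1 / 2) : ℝ)) := by
  set S := (Finset.Icc (-k) k).sup' (Finset.nonempty_Icc.mpr (by linarith)) Z with hS
  have hle : ∀ j < l + 1, |(z j).2| ≤ k := by
    intro j hj
    rw [hk]
    exact Finset.le_sup' (fun j => |(z j).2|) (Finset.mem_range.mpr hj)
  have hZS : ∀ j < l + 1, Z (z j).2 ≤ S := by
    intro j hj
    exact Finset.le_sup' Z (Finset.mem_Icc.mpr (abs_le.mp (hle j hj)))
  obtain ⟨p, hp, hpk⟩ := Finset.exists_mem_eq_sup' 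
    (Finset.nonempty_range_iff.mpr (Nat.succ_ne_zero l)) (fun j => |(z j).2|)
  rw [← hk] at hpk
  have hpl : p ≤ l := by have := Finset.mem_range.mp hp; omega
  have hV : 2 * k ≤ ∑ j ∈ Finset.range l, |(z (j + 1)).2 - (z j).2| := by
    have h1 := abs_sub_le_sum_Ico_aux (fun j => (z j).2) 0 p (Nat.zero_le p)
    have h2 := abs_sub_le_sum_Ico_aux (fun j => (z j).2) p l hpl
    have h3 := Finset.sum_Ico_consecutive (fun j => |(z (j + 1)).2 - (z j).2|)
      (Nat.zero_le p) hpl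
    simp only [h0, hend, sub_zero, zero_sub, abs_neg] at h1 h2
    rw [Finset.range_eq_Ico, ← h3]
    linarith
  have hH : L ≤ ∑ j ∈ Finset.range l, |(z (j + 1)).1 - (z j).1| := by
    have h1 := abs_sub_le_sum_Ico_aux (fun j => (z j).1) 0 l (Nat.zero_le l)
    simp only [h0, hend, sub_zero] at h1
    rw [Finset.range_eq_Ico]
    exact (le_abs_self L).trans h1
  have hS1 : 1 ≤ S := (hZ _).trans (hZS 0 (by omega))
  have hM : 0 ≤ S ^ (-(1 / 2) : ℝ) := Real.rpow_nonneg (by linarith) _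
  have hhor : ∀ j < l, S ^ (-(1 / 2) : ℝ) ≤ min 1 ((Z (z j).2) ^ (-(1 / 2) : ℝ)) := by
    intro j hj
    refine le_min (Real.rpow_le_one_of_one_le_of_nonpos hS1 (by norm_num)) ?_
    exact Real.rpow_le_rpow_of_nonpos (by linarith [hZ (z j).2]) (hZS j (by omega)) (by norm_num)
  have hstep : ∀ j ∈ Finset.range l,
      ((|(z (j + 1)).2 - (z j).2| : ℤ) : ℝ)
        + ((|(z (j + 1)).1 - (z j).1| : ℤ) : ℝ) * S ^ (-(1 / 2) : ℝ)
      ≤ min 1 ((ω (z j) (z (j + 1))) ^ (-(1 / 2) : ℝ)) := by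
    intro j hj
    have hjl := Finset.mem_range.mp hj
    have hs := hpath j hjl
    have hh := hhor j hjl
    generalize z (j + 1) = w at *
    generalize z j = v at *
    obtain ⟨a, b⟩ := w
    have hc : (a = v.1 ∧ b = v.2 + 1) ∨ (a = v.1 ∧ b = v.2 - 1) ∨
        (a = v.1 + 1 ∧ b = v.2) ∨ (a = v.1 - 1 ∧ b = v.2) := by
      simp only at hs
      rcases abs_cases (a - v.1) with h | h <;> rcases abs_cases (b - v.2) with h' | h' <;> omega
    rcases hc with ⟨rfl, rfl⟩ | ⟨rfl, rfl⟩ | ⟨rfl, rfl⟩ | ⟨rfl, rfl⟩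
    · rw [hvu]; simp
    · rw [hvd]; simp
    · rw [hhr]; simpa using hh
    · rw [hhl]; simpa using hh
  refine le_trans ?_ (Finset.sum_le_sum hstep)
  rw [Finset.sum_add_distrib, ← Finset.sum_mul]
  have hV' : 2 * (k : ℝ) ≤ ∑ j ∈ Finset.range l, ((|(z (j + 1)).2 - (z j).2| : ℤ) : ℝ) := by
    exact_mod_cast hV
  have hH' : (L : ℝ) ≤ ∑ j ∈ Finset.range l, ((|(z (j + 1)).1 - (z j).1| : ℤ) : ℝ) := by
    exact_mod_cast hH
  exact add_le_add hV' (mul_le_mul_of_nonneg_right hH' hM)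
end

section
/- Let Z : ℤ → ℝ satisfy Z i ≥ 1 for all i. Equip ℤ² with nearest-neighbour edges and conductances ω given by: ω(x, x ± (0,1)) = 1 (vertical edges) and ω(x, x + (1,0)) = Z(x₂) (horizontal edges on the line with second coordinate x₂). Then for every L ≥ 1 and every K ≥ 0 there exists a nearest-neighbour path z₀ = (0,0), z₁, …, z_l = (L, 0) in ℤ² with ∑_{j=0}^{l−1} min(1, ω(z_j, z_{j+1})^{−1/2}) ≤ 2K + L · (max_{−K ≤ i ≤ K} Z i)^{−1/2}. -/
/-- There is a nearest-neighbour path from `a` to `b` of length at most `c`. -/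
def HasPath (ω : ℤ × ℤ → ℤ × ℤ → ℝ) (a b : ℤ × ℤ) (c : ℝ) : Prop :=
  ∃ (l : ℕ) (z : ℕ → ℤ × ℤ), z 0 = a ∧ z l = b ∧
    (∀ j < l, |(z (j + 1)).1 - (z j).1| + |(z (j + 1)).2 - (z j).2| = 1) ∧
    ∑ j ∈ Finset.range l, min 1 ((ω (z j) (z (j + 1))) ^ (-(1 / 2) : ℝ)) ≤ c

theorem HasPath.step {ω : ℤ × ℤ → ℤ × ℤ → ℝ} {a b : ℤ × ℤ} {c : ℝ} (h : HasPath ω a b c)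
    (b' : ℤ × ℤ) (d : ℝ) (hb : |b'.1 - b.1| + |b'.2 - b.2| = 1)
    (hd : min 1 ((ω b b') ^ (-(1 / 2) : ℝ)) ≤ d) : HasPath ω a b' (c + d) := by
  obtain ⟨l, z, h0, hl, hs, hc⟩ := h
  have key : ∀ j, j ≤ l → Function.update z (l + 1) b' j = z j := fun j hj =>
    Function.update_of_ne (by omega) _ _
  have keyl : Function.update z (l + 1) b' (l + 1) = b' := Function.update_self _ _ _
  refine ⟨l + 1, Function.update z (l + 1) b', ?_, keyl, ?_, ?_⟩
  · rw [key 0 (by omega), h0]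
  · intro j hj
    rcases Nat.lt_or_ge j l with h | h
    · rw [key j (by omega), key (j + 1) (by omega)]
      exact hs j h
    · obtain rfl : j = l := by omega
      rw [key j le_rfl, keyl, hl]
      exact hb
  · rw [Finset.sum_range_succ, keyl, key l le_rfl, hl]
    refine add_le_add (le_trans (le_of_eq ?_) hc) hd
    refine Finset.sum_congr rfl fun j hj => ?_
    have := Finset.mem_range.mp hj
    rw [key j (by omega), key (j + 1) (by omega)]

theorem HasPath.vert {ω : ℤ × ℤ → ℤ × ℤ → ℝ} {a : ℤ × ℤ} {c : ℝ} {x y : ℤ}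
    (h : HasPath ω a (x, y) c) (s : ℤ) (hs : s = 1 ∨ s = -1) (n : ℕ) :
    HasPath ω a (x, y + s * n) (c + n) := by
  induction n with
  | zero => simpa using h
  | succ n ih =>
    have := ih.step (x, y + s * (n + 1 : ℕ)) 1
      (by rcases hs with rfl | rfl <;> simp) (min_le_left _ _)
    convert this using 1
    push_cast
    ring

theorem HasPath.horiz {ω : ℤ × ℤ → ℤ × ℤ → ℝ} {a : ℤ × ℤ} {c : ℝ} {x y : ℤ} {m : ℝ}
    (hm : ∀ x : ℤ, ω (x, y) (x + 1, y) = m)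
    (h : HasPath ω a (x, y) c) (n : ℕ) :
    HasPath ω a (x + n, y) (c + n * m ^ (-(1 / 2) : ℝ)) := by
  induction n with
  | zero => simpa using h
  | succ n ih =>
    have := ih.step (x + n + 1, y) (m ^ (-(1 / 2) : ℝ))
      (by simp) (by rw [hm]; exact min_le_right _ _)
    convert this using 1
    · push_cast
      rw [add_assoc]
    · push_cast
      ring

open Finset in
/-- Deterministic upper-bound core of Lemma 1.9: there exists a nearest-neighbour
path in `ℤ²` from `(0,0)` to `(L,0)` of `ω`-length at most
`2K + L · (max_{-K ≤ i ≤ K} Z i)^{-1/2}`. -/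
theorem chemical_distance_upper_bound (Z : ℤ → ℝ) (hZ : ∀ i, 1 ≤ Z i)
    (ω : ℤ × ℤ → ℤ × ℤ → ℝ)
    (hvu : ∀ x : ℤ × ℤ, ω x (x.1, x.2 + 1) = 1)
    (hvd : ∀ x : ℤ × ℤ, ω x (x.1, x.2 - 1) = 1)
    (hhr : ∀ x : ℤ × ℤ, ω x (x.1 + 1, x.2) = Z x.2)
    (hhl : ∀ x : ℤ × ℤ, ω x (x.1 - 1, x.2) = Z x.2)
    (L : ℤ) (hL : 1 ≤ L)
    (K : ℤ) (hK : 0 ≤ K) :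
    ∃ (l : ℕ) (z : ℕ → ℤ × ℤ),
      z 0 = (0, 0) ∧ z l = (L, 0) ∧
      (∀ j < l, |(z (j + 1)).1 - (z j).1| + |(z (j + 1)).2 - (z j).2| = 1) ∧
      ∑ j ∈ Finset.range l, min 1 ((ω (z j) (z (j + 1))) ^ (-(1 / 2) : ℝ))
        ≤ 2 * (K : ℝ) +
            (L : ℝ) * ((Finset.Icc (-K) K).sup'
              (Finset.nonempty_Icc.mpr (by linarith)) Z) ^ (-(1 / 2) : ℝ) := by
  obtain ⟨i, hi, hmax⟩ := Finset.exists_mem_eq_sup' (s := Finset.Icc (-K) K)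
    (Finset.nonempty_Icc.mpr (by linarith)) Z
  rw [hmax]
  rw [Finset.mem_Icc] at hi
  have p0 : HasPath ω (0, 0) (0, 0) 0 := ⟨0, fun _ => (0, 0), rfl, rfl, by simp, by simp⟩
  obtain ⟨s, hs, n, hn, hnK⟩ : ∃ s : ℤ, (s = 1 ∨ s = -1) ∧ ∃ n : ℕ, i = s * n ∧ (n : ℤ) ≤ K := by
    rcases le_total 0 i with h | h
    · exact ⟨1, Or.inl rfl, i.toNat, by omega, by omega⟩
    · exact ⟨-1, Or.inr rfl, (-i).toNat, by omega, by omega⟩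
  have p1 := p0.vert s hs n
  rw [zero_add, ← hn] at p1
  have p2 := p1.horiz (m := Z i) (fun x => hhr (x, i)) L.toNat
  have p3 := p2.vert (-s) (by omega) n
  have e1 : (0 : ℤ) + (L.toNat : ℤ) = L := by omega
  have e2 : i + -s * n = 0 := by rw [hn]; ring
  have e3 : ((L.toNat : ℕ) : ℝ) = (L : ℝ) := by
    have : ((L.toNat : ℕ) : ℤ) = L := by omega
    exact_mod_cast this
  have e4 : (n : ℝ) ≤ (K : ℝ) := by exact_mod_cast hnK
  rw [e1, e2, e3] at p3
  obtain ⟨l, z, h0, hl, hst, hc⟩ := p3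
  exact ⟨l, z, h0, hl, hst, hc.trans (by linarith)⟩
end
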